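/- Let (S, 𝓕, P) be a probability space and let A : S → (p × p real matrices) be measurable, with ‖A(ω)‖ ≤ r < 1 for P-almost every ω in Frobenius norm. Then for every integer u ≥ 1 the series Σ_{v=0}^∞ E[A^v ⊗ A^{v+u}] converges in the space of p² × p² real matrices, and E[(I_p ⊗ A^u)(I_{p²} − A ⊗ A)^{−1}] = Σ_{v=0}^∞ E[A^v ⊗ A^{v+u}]. -/

import Mathlib

open MeasureTheory Kronecker Matrix

attribute [local instance] Matrix.frobeniusNormedAddCommGroup Matrix.frobeniusNormedSpace

noncomputable instance {m n : Type*} : MeasurableSpace (Matrix m n ℝ) :=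
  inferInstanceAs (MeasurableSpace (m → n → ℝ))

instance {m n : Type*} [Fintype m] [Fintype n] : BorelSpace (Matrix m n ℝ) :=
  inferInstanceAs (BorelSpace (m → n → ℝ))

theorem aux_norm_kron {m : Type*} [Fintype m] (B C : Matrix m m ℝ) :
    ‖B ⊗ₖ C‖ = ‖B‖ * ‖C‖ := by
  rw [Matrix.frobenius_norm_def, Matrix.frobenius_norm_def, Matrix.frobenius_norm_def,
    ← Real.mul_rpow (by positivity) (by positivity)]
  congr 1
  simp only [Fintype.sum_prod_type, Matrix.kroneckerMap_apply, norm_mul, Real.rpow_two, mul_pow]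
  simp only [Finset.sum_mul_sum]

theorem aux_norm_pow {m : Type*} [Fintype m] [DecidableEq m] (B : Matrix m m ℝ) (v : ℕ) :
    ‖B ^ v‖ ≤ ‖(1 : Matrix m m ℝ)‖ * ‖B‖ ^ v := by
  induction v with
  | zero => simp
  | succ k ih =>
    rw [pow_succ, pow_succ, ← mul_assoc]
    exact (Matrix.frobenius_norm_mul _ _).trans (by gcongr)

theorem aux_kron_pow {m : Type*} [Fintype m] [DecidableEq m] (B : Matrix m m ℝ) (v : ℕ) :
    (B ⊗ₖ B) ^ v = (B ^ v) ⊗ₖ (B ^ v) := by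
  induction v with
  | zero => simp
  | succ k ih => rw [pow_succ, ih, ← Matrix.mul_kronecker_mul, pow_succ]

theorem aux_one_kron_pow {m : Type*} [Fintype m] [DecidableEq m] (B : Matrix m m ℝ) (v : ℕ) :
    ((1 : Matrix m m ℝ) ⊗ₖ B) ^ v = (1 : Matrix m m ℝ) ⊗ₖ (B ^ v) := by
  induction v with
  | zero => simp
  | succ k ih => rw [pow_succ, ih, ← Matrix.mul_kronecker_mul, pow_succ, one_mul]

theorem aux_geom {m : Type*} [Fintype m] [DecidableEq m] (K : Matrix m m ℝ) (h : ‖K‖ < 1) :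
    HasSum (fun v : ℕ => K ^ v) (1 - K)⁻¹ := by
  let i : NormedRing (Matrix m m ℝ) := Matrix.frobeniusNormedRing
  have hc : @CompleteSpace (Matrix m m ℝ) i.toPseudoMetricSpace.toUniformSpace :=
    FiniteDimensional.complete ℝ (Matrix m m ℝ)
  have hs : Summable (fun v : ℕ => K ^ v) := summable_geometric_of_norm_lt_one h
  have e := Matrix.inv_eq_right_inv (mul_neg_geom_series K h)
  rw [e]
  exact hs.hasSum

/-- If `A : S → ℝ^{p×p}` is measurable with Frobenius norm a.e. bounded by some `r < 1`,
then for every `u ≥ 1` the series `Σ_v E[A^v ⊗ A^{v+u}]` converges and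
`E[(I ⊗ A^u)(I - A ⊗ A)⁻¹] = Σ_v E[A^v ⊗ A^{v+u}]`. -/
theorem integral_kronecker_shifted {S : Type*} [MeasurableSpace S] (P : Measure S)
    [IsProbabilityMeasure P] {p : ℕ} (A : S → Matrix (Fin p) (Fin p) ℝ)
    (hA : Measurable A) (r : ℝ) (hr : r < 1) (hbound : ∀ᵐ ω ∂P, ‖A ω‖ ≤ r) :
    ∀ u : ℕ, 1 ≤ u →
      (Summable fun v : ℕ => ∫ ω, ((A ω) ^ v) ⊗ₖ ((A ω) ^ (v + u)) ∂P) ∧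
      (∫ ω, ((1 : Matrix (Fin p) (Fin p) ℝ) ⊗ₖ (A ω) ^ u) * (1 - (A ω) ⊗ₖ (A ω))⁻¹ ∂P) =
        ∑' v : ℕ, ∫ ω, ((A ω) ^ v) ⊗ₖ ((A ω) ^ (v + u)) ∂P := by
  intro u _
  obtain ⟨ω₀, h₀⟩ := hbound.exists
  have hr0 : 0 ≤ r := (norm_nonneg _).trans h₀
  set c : ℝ := ‖(1 : Matrix (Fin p) (Fin p) ℝ)‖ with hc
  have hc0 : 0 ≤ c := norm_nonneg _
  have hsum : Summable (fun v : ℕ => (c * r ^ v) * (c * r ^ u)) := by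
    refine Summable.mul_right _ (Summable.mul_left _ (summable_geometric_of_lt_one hr0 hr))
  have key : HasSum (fun v : ℕ => ∫ ω, ((A ω) ^ v) ⊗ₖ ((A ω) ^ (v + u)) ∂P)
      (∫ ω, ((1 : Matrix (Fin p) (Fin p) ℝ) ⊗ₖ (A ω) ^ u) * (1 - (A ω) ⊗ₖ (A ω))⁻¹ ∂P) := by
    refine hasSum_integral_of_dominated_convergence
      (fun v _ => (c * r ^ v) * (c * r ^ u)) ?_ ?_ ?_ ?_ ?_
    · intro v
      have hcont : Continuous (fun M : Matrix (Fin p) (Fin p) ℝ => (M ^ v) ⊗ₖ (M ^ (v + u))) := by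
        refine continuous_matrix fun i j => ?_
        simp only [Matrix.kroneckerMap_apply]
        exact ((continuous_id.pow v).matrix_elem _ _).mul
          ((continuous_id.pow (v + u)).matrix_elem _ _)
      have hsc : SecondCountableTopology (Matrix (Fin p) (Fin p) ℝ) :=
        inferInstanceAs (SecondCountableTopology (Fin p → Fin p → ℝ))
      exact (hcont.comp_stronglyMeasurable hA.stronglyMeasurable).aestronglyMeasurable
    · intro v
      filter_upwards [hbound] with ω hω
      rw [aux_norm_kron]
      have h1 : ‖A ω ^ v‖ ≤ c * r ^ v := (aux_norm_pow _ _).trans (by gcongr)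
      have h2 : ‖A ω ^ (v + u)‖ ≤ c * r ^ u := by
        refine (aux_norm_pow _ _).trans ?_
        have : ‖A ω‖ ^ (v + u) ≤ r ^ u :=
          (pow_le_pow_left₀ (norm_nonneg _) hω _).trans
            (pow_le_pow_of_le_one hr0 hr.le (by omega))
        gcongr
      gcongr
    · exact Filter.Eventually.of_forall fun _ => hsum
    · exact integrable_const _
    · filter_upwards [hbound] with ω hω
      have hK : ‖A ω ⊗ₖ A ω‖ < 1 := by
        rw [aux_norm_kron]
        nlinarith [norm_nonneg (A ω)]
      have h := (aux_geom _ hK).mul_left ((1 : Matrix (Fin p) (Fin p) ℝ) ⊗ₖ (A ω) ^ u)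
      have e : (fun v : ℕ => ((A ω) ^ v) ⊗ₖ ((A ω) ^ (v + u))) =
          fun v : ℕ => ((1 : Matrix (Fin p) (Fin p) ℝ) ⊗ₖ (A ω) ^ u) * (A ω ⊗ₖ A ω) ^ v := by
        funext v
        rw [aux_kron_pow, aux_one_kron_pow, ← Matrix.mul_kronecker_mul, one_mul, ← pow_add,
          add_comm]
      rw [e]
      exact h
  exact ⟨key.summable, key.tsum_eq.symm⟩
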